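/- arXiv:2012.04705 — 4 statements merged into one kernel-verified Lean document; each statement's English description precedes it below -/
import Mathlib

section
/- Let i ≥ 1, L ≥ 1 and nonnegative integers a_1,…,a_i with a_i ≥ a_j for all j ∈ [i] be given, and set K = (i−1)L + Σ_{j=1}^{i} a_j + 1. Then the optimal broadcast rate R* of the (a_i,…,a_1)_L-bar-ICP satisfies R* ≤ min{ 2(K−(i−1)L) + i − 2 − a_i , K }. -/
open Finset

/-- `<m>_n`: the unique element of `{1,…,n}` congruent to `m` modulo `n`. -/
def angMod (m : ℤ) (n : ℕ) : ℕ :=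
  if m % (n : ℤ) = 0 then n else (m % (n : ℤ)).toNat

/-- Message indices of the bar-ICP: pairs in `[K] × [i]`. -/
abbrev Msg (K i : ℕ) : Type :=
  {p : ℕ × ℕ // p.1 ∈ Finset.Icc 1 K ∧ p.2 ∈ Finset.Icc 1 i}

/-- Users of the bar-ICP: elements of `[K]`. -/
abbrev User (K : ℕ) : Type := {k : ℕ // k ∈ Finset.Icc 1 K}

/-- The side-information index set `K_k` of user `k` in the
`(a_i,…,a_1)_L`-bar-ICP, as a set of pairs `(b,t)`. -/
def knownIdx (K i L : ℕ) (a : ℕ → ℕ) (k : ℕ) : Set (ℕ × ℕ) :=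
  {p | ∃ t ∈ Finset.Icc 1 i, ∃ v ∈ Finset.Icc 1 (i - 1), ∃ r ∈ Finset.Icc 1 L,
    p.2 = t ∧
    p.1 = angMod ((k : ℤ) + (∑ j ∈ Finset.Icc 1 v, (a (angMod ((i : ℤ) + (t : ℤ) - (j : ℤ)) i) : ℤ))
        + ((v : ℤ) - 1) * (L : ℤ) + (r : ℤ)) K}

/-- Want set of user `u` in the bar-ICP: the messages `(u,t)`, `t ∈ [i]`. -/
def barWant (K i : ℕ) (u : User K) : Set (Msg K i) :=
  {p | p.1.1 = u.1}

/-- Known set of user `u` in the bar-ICP. -/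
def barKnown (K i L : ℕ) (a : ℕ → ℕ) (u : User K) : Set (Msg K i) :=
  {p | p.1 ∈ knownIdx K i L a u.1}

/-- A valid index code of length `ℓ` for message length `t` for the index coding
problem with message index set `I`, users `U`, want sets `W` and known sets `Kn`. -/
def ValidCode {I U : Type} (W Kn : U → Set I) (t ℓ : ℕ) : Prop :=
  ∃ E : (I → Fin t → Bool) → Fin ℓ → Bool,
  ∃ D : ∀ u : U, (Fin ℓ → Bool) → (↥(Kn u) → Fin t → Bool) → (↥(W u) → Fin t → Bool),
    ∀ x : I → Fin t → Bool, ∀ u : U,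
      D u (E x) (fun m => x m.1) = fun m => x m.1

/-- The optimal broadcast rate of an index coding problem. -/
noncomputable def optRate {I U : Type} (W Kn : U → Set I) : ℝ :=
  sInf {ρ : ℝ | ∃ t ℓ : ℕ, 1 ≤ t ∧ ValidCode W Kn t ℓ ∧ ρ = (ℓ : ℝ) / (t : ℝ)}

/-! View the messages `(b, u)` as a `K × i` array and colour `(b, u)` by the cyclic diagonal
`b - s_u` modulo `K`, where `s_u = ∑_{j < u} (a_j + L)`. In this colouring user `k` knows the
messages of layer `u` on the diagonals `k - s_t - q` for `t < u` and `k - s_t + q` for `t > u`,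
where `0 ≤ q < L`. Taking `q = 0`, all other messages on the diagonal `k - s_u` of a demanded
message `(k, u)` are known, so the sum over that diagonal suffices to decode it. Moreover all
messages on a diagonal `k - d` with `s_t + a_t < d < s_t + L` are known, since `d` is less than
`L` away from both `s_t` and `s_{t+1}`. At most `2 ∑ a_j + i - a_i` diagonals remain, and a
maximum distance separable code with that many parities delivers their sums to every user. -/

section LinearCodes

variable {I U : Type} {W Kn : U → Set I}

theorem validCode_of_encoder_separates {t ℓ : ℕ} (E : (I → Fin t → Bool) → Fin ℓ → Bool)
    (hE : ∀ x x' u, E x = E x' → (∀ m ∈ Kn u, x m = x' m) → ∀ m ∈ W u, x m = x' m) :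
    ValidCode W Kn t ℓ := by
  classical
  refine ⟨E, fun u c s m => if h : ∃ x, E x = c ∧ (fun q : Kn u => x q) = s then h.choose m
    else fun _ => false, fun x u => funext fun m => ?_⟩
  have h : ∃ x', E x' = E x ∧ (fun q : Kn u => x' q) = fun q : Kn u => x q := ⟨x, rfl, rfl⟩
  exact (dif_pos h).trans
    (hE _ _ u h.choose_spec.1 (fun q hq => congrFun h.choose_spec.2 ⟨q, hq⟩) m m.2)

theorem validCode_of_additive_encoder {F : Type*} [AddCommGroup F] {t n : ℕ}
    (e : (Fin t → Bool) ≃ F) (A : (I → F) →+ (Fin n → F))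
    (hA : ∀ u z, A z = 0 → (∀ m ∈ Kn u, z m = 0) → ∀ m ∈ W u, z m = 0) :
    ValidCode W Kn t (n * t) := by
  let E (x : I → Fin t → Bool) (p : Fin (n * t)) : Bool :=
    e.symm (A (e ∘ x) (finProdFinEquiv.symm p).1) (finProdFinEquiv.symm p).2
  refine validCode_of_encoder_separates E fun x x' u hE hK m hm => ?_
  have hAx : A (e ∘ x) = A (e ∘ x') := by
    ext j
    refine e.symm.injective (funext fun b => ?_)
    simpa only [E, Equiv.symm_apply_apply] using congrFun hE (finProdFinEquiv (j, b))
  have hdiff := hA u (e ∘ x - e ∘ x') (by rw [map_sub, hAx, sub_self])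
    (fun q hq => sub_eq_zero.mpr (congrArg e (hK q hq))) m hm
  exact e.injective (sub_eq_zero.mp hdiff)

theorem optRate_le_of_validCode {t ℓ : ℕ} (ht : 1 ≤ t) (h : ValidCode W Kn t ℓ) :
    optRate W Kn ≤ (ℓ : ℝ) / t := by
  refine csInf_le ⟨0, ?_⟩ ⟨t, ℓ, ht, h, rfl⟩
  rintro _ ⟨t', ℓ', -, -, rfl⟩
  positivity

end LinearCodes

section LocalColoring

theorem eq_zero_of_hammingNorm_le_of_power_sums_eq_zero {R ι : Type*} [CommRing R] [IsDomain R]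
    [DecidableEq R] [Fintype ι] {α y : ι → R} (hα : Function.Injective α) {M : ℕ}
    (hy : hammingNorm y ≤ M) (hsum : ∀ j < M, ∑ m, y m * α m ^ j = 0) : y = 0 := by
  let S : Finset ι := {m | y m ≠ 0}
  let e : Fin S.card ≃ S := S.equivFin.symm
  have hS : ∀ m ∉ S, y m = 0 := fun m hm => by simpa [S] using hm
  have hsupport : (fun n => y (e n)) = 0 := by
    refine Matrix.eq_zero_of_forall_pow_sum_mul_pow_eq_zero (f := fun n => α (e n))
      (hα.comp (Subtype.val_injective.comp e.injective)) fun j => ?_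
    calc ∑ n, y (e n) * α (e n) ^ (j : ℕ)
        = ∑ m : S, y m * α m ^ (j : ℕ) := e.sum_comp fun m : S => y m * α m ^ (j : ℕ)
      _ = ∑ m ∈ S, y m * α m ^ (j : ℕ) := sum_coe_sort S fun m => y m * α m ^ (j : ℕ)
      _ = ∑ m, y m * α m ^ (j : ℕ) :=
        sum_subset (subset_univ S) fun m _ hm => by rw [hS m hm, zero_mul]
      _ = 0 := hsum j (j.2.trans_le hy)
  funext m
  by_cases hm : m ∈ S
  · simpa [e] using congrFun hsupport (e.symm ⟨m, hm⟩)
  · exact hS m hm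

variable {I U : Type} {ι : Type*} {W Kn : U → Set I} {c : I → ι} {M : ℕ}

theorem validCode_of_localColoring {F : Type*} [Field F] [Finite I] [Finite ι] {t : ℕ}
    (e : (Fin t → Bool) ≃ F) (α : ι ↪ F)
    (hproper : ∀ u, ∀ p ∈ W u, ∀ q, c q = c p → q ≠ p → q ∈ Kn u)
    (hlocal : ∀ u, (c '' (Kn u)ᶜ).ncard ≤ M) : ValidCode W Kn t (M * t) := by
  classical
  have := Fintype.ofFinite I
  have := Fintype.ofFinite ι
  let A : (I → F) →+ (Fin M → F) :=
    { toFun := fun z j => ∑ p, z p * α (c p) ^ (j : ℕ)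
      map_zero' := by ext; simp
      map_add' := fun z z' => by ext; simp [add_mul, sum_add_distrib] }
  refine validCode_of_additive_encoder e A fun u z hAz hz p hp => ?_
  let y : ι → F := fun m => ∑ q with c q = m, z q
  have hyM : hammingNorm y ≤ M := by
    rw [hammingNorm, ← Set.ncard_coe_finset]
    refine (Set.ncard_le_ncard fun m hm => ?_).trans (hlocal u)
    obtain ⟨q, hq, hzq⟩ := exists_ne_zero_of_sum_ne_zero (mem_filter.mp hm).2
    exact ⟨q, fun hknown => hzq (hz q hknown), (mem_filter.mp hq).2⟩
  have hpower : ∀ j < M, ∑ m, y m * α m ^ j = 0 := fun j hj =>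
    calc ∑ m, y m * α m ^ j = ∑ m, ∑ q with c q = m, z q * α (c q) ^ j :=
          sum_congr rfl fun m _ => by
            rw [sum_mul]
            exact sum_congr rfl fun q hq => by rw [(mem_filter.mp hq).2]
      _ = ∑ q, z q * α (c q) ^ j := sum_fiberwise univ c _
      _ = 0 := congrFun hAz ⟨j, hj⟩
  have hy : y = 0 := eq_zero_of_hammingNorm_le_of_power_sums_eq_zero α.injective hyM hpower
  calc z p = y (c p) := (sum_eq_single_of_mem p (by simp) fun q hq hqp =>
          hz q (hproper u p hp q (mem_filter.mp hq).2 hqp)).symm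
    _ = 0 := congrFun hy (c p)

/-- The local colouring bound of Shanmugam, Dimakis and Langberg. -/
theorem optRate_le_of_localColoring [Finite I] [Finite ι]
    (hproper : ∀ u, ∀ p ∈ W u, ∀ q, c q = c p → q ≠ p → q ∈ Kn u)
    (hlocal : ∀ u, (c '' (Kn u)ᶜ).ncard ≤ M) : optRate W Kn ≤ M := by
  have := Fintype.ofFinite ι
  let t := Fintype.card ι + 1
  have := Fintype.ofFinite (GaloisField 2 t)
  have hcard : Fintype.card (GaloisField 2 t) = 2 ^ t := by
    rw [← Nat.card_eq_fintype_card, GaloisField.card 2 t (Nat.succ_ne_zero _)]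
  have e : (Fin t → Bool) ≃ GaloisField 2 t := Fintype.equivOfCardEq (by simp [hcard])
  obtain ⟨α⟩ : Nonempty (ι ↪ GaloisField 2 t) := Function.Embedding.nonempty_of_card_le
    (hcard ▸ (Nat.lt_succ_self _).le.trans Nat.lt_two_pow_self.le)
  have h := optRate_le_of_validCode (Nat.succ_pos _)
    (validCode_of_localColoring e α hproper hlocal)
  rwa [Nat.cast_mul, mul_div_cancel_right₀ _ (by positivity)] at h

end LocalColoring

section AngMod

variable {n k k' : ℕ} {z : ℤ}

theorem angMod_eq_of_intCast_eq (hk : k ∈ Icc 1 n) (h : (z : ZMod n) = k) : angMod z n = k := by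
  have hmod : z % n = (k : ℤ) % n := (ZMod.intCast_eq_intCast_iff z k n).mp (by exact_mod_cast h)
  obtain ⟨hk1, hkn⟩ := mem_Icc.mp hk
  rw [angMod, hmod]
  obtain rfl | hlt := hkn.eq_or_lt
  · simp
  · rw [Int.emod_eq_of_lt (by omega) (by omega), if_neg (by omega), Int.toNat_natCast]

theorem eq_of_natCast_zmod_eq (hk : k ∈ Icc 1 n) (hk' : k' ∈ Icc 1 n)
    (h : (k : ZMod n) = k') : k = k' :=
  (angMod_eq_of_intCast_eq hk (Int.cast_natCast k)).symm.trans
    (angMod_eq_of_intCast_eq hk' (by exact_mod_cast h))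

end AngMod

/-- The shift `s_u = a_1 + ⋯ + a_{u-1} + (u-1) L` of the layer of messages `(b, u)`, `b ∈ [K]`. -/
def layerShift (L : ℕ) (a : ℕ → ℕ) (u : ℕ) : ℕ :=
  ∑ j ∈ Ico 1 u, (a j + L)

/-- The colour of the message `(b, u)`: the cyclic diagonal `b - s_u` on which it lies. -/
def diagonal (K i L : ℕ) (a : ℕ → ℕ) (p : Msg K i) : ZMod K :=
  p.1.1 - layerShift L a p.1.2

/-- The offsets `d` for which user `k` may be ignorant of a message on the diagonal `k - d`. -/
def unknownOffsets (i L : ℕ) (a : ℕ → ℕ) : Finset ℕ :=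
  ((Icc 1 i).biUnion fun t => Icc (layerShift L a t) (layerShift L a t + a t)) ∪
    (Ico 1 i).biUnion fun t => Ico (layerShift L a t + L) (layerShift L a (t + 1))

section LayerShift

variable {K i L t u v : ℕ} {a : ℕ → ℕ}

theorem layerShift_succ (ht : 1 ≤ t) :
    layerShift L a (t + 1) = layerShift L a t + (a t + L) :=
  sum_Ico_succ_top ht _

theorem layerShift_succ_add_one (hi : 1 ≤ i) (hK : K = (i - 1) * L + ∑ j ∈ Icc 1 i, a j + 1) :
    layerShift L a (i + 1) + 1 = K + L := by
  obtain ⟨n, rfl⟩ := Nat.exists_eq_add_of_le' hi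
  rw [layerShift, sum_add_distrib, sum_const, Nat.card_Ico, smul_eq_mul, hK,
    Ico_add_one_right_eq_Icc]
  simp only [Nat.add_sub_cancel]
  ring

theorem layerShift_add_sum_angMod (ht : 1 ≤ t) (hu : t + v = u) (hui : u ≤ i) :
    layerShift L a t + ∑ j ∈ Icc 1 v, (a (angMod ((i : ℤ) + u - j) i) + L) =
      layerShift L a u := by
  induction v generalizing t with
  | zero => simp [← hu]
  | succ v ih =>
    have hindex : angMod ((i : ℤ) + u - (v + 1 : ℕ)) i = t :=
      angMod_eq_of_intCast_eq (mem_Icc.mpr (by omega)) (by simp [← hu])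
    rw [sum_Icc_succ_top (by omega), hindex, ← ih (by omega) (by omega : t + 1 + v = u),
      layerShift_succ ht]
    ring

theorem layerShift_add_sum_angMod_wrap (hu : 1 ≤ u) (hut : u < t) (hti : t ≤ i + 1)
    (hv : t + v = i + u) :
    layerShift L a t + ∑ j ∈ Icc 1 v, (a (angMod ((i : ℤ) + u - j) i) + L) =
      layerShift L a (i + 1) + layerShift L a u := by
  induction hti using Nat.decreasingInduction generalizing v with
  | self =>
    have hsum := layerShift_add_sum_angMod (L := L) (a := a) (i := i) le_rfl
      (by omega : 1 + v = u) (by omega)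
    rw [← hsum]
    simp [layerShift]
  | of_succ t hti ih =>
    obtain ⟨w, rfl⟩ : ∃ w, v = w + 1 := ⟨v - 1, by omega⟩
    have hindex : angMod ((i : ℤ) + u - (w + 1 : ℕ)) i = t :=
      angMod_eq_of_intCast_eq (mem_Icc.mpr (by omega)) (by
        have : (i : ℤ) + u - (w + 1 : ℕ) = t := by omega
        rw [this, Int.cast_natCast])
    rw [sum_Icc_succ_top (by omega), hindex, ← ih (by omega) (by omega : t + 1 + w = i + u),
      layerShift_succ (by omega)]
    ring

theorem exists_layerShift_le_lt {d : ℕ} (hd : d < layerShift L a (i + 1)) :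
    ∃ t ∈ Icc 1 i, layerShift L a t ≤ d ∧ d < layerShift L a (t + 1) := by
  induction i with
  | zero => simp [layerShift] at hd
  | succ n ih =>
    by_cases hdn : d < layerShift L a (n + 1)
    · obtain ⟨t, ht, hbounds⟩ := ih hdn
      exact ⟨t, Icc_subset_Icc_right n.le_succ ht, hbounds⟩
    · exact ⟨n + 1, by simp, not_lt.mp hdn, hd⟩

theorem card_unknownOffsets_add_le (hi : 1 ≤ i) :
    (unknownOffsets i L a).card + a i ≤ 2 * ∑ j ∈ Icc 1 i, a j + i := by
  have hfirst : ((Icc 1 i).biUnion fun t =>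
      Icc (layerShift L a t) (layerShift L a t + a t)).card ≤ ∑ j ∈ Icc 1 i, a j + i :=
    calc _ ≤ ∑ t ∈ Icc 1 i, (a t + 1) := card_biUnion_le.trans
          (sum_le_sum fun t _ => by rw [Nat.card_Icc]; omega)
      _ = ∑ j ∈ Icc 1 i, a j + i := by simp [sum_add_distrib]
  have hsecond : ((Ico 1 i).biUnion fun t =>
      Ico (layerShift L a t + L) (layerShift L a (t + 1))).card ≤ ∑ j ∈ Ico 1 i, a j :=
    card_biUnion_le.trans (sum_le_sum fun t ht => by
      rw [Nat.card_Ico, layerShift_succ (mem_Ico.mp ht).1]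
      omega)
  have hsplit : ∑ j ∈ Icc 1 i, a j = ∑ j ∈ Ico 1 i, a j + a i := by
    rw [← Ico_add_one_right_eq_Icc, sum_Ico_succ_top hi]
  have hunion : (unknownOffsets i L a).card ≤ _ := card_union_le _ _
  omega

end LayerShift

section BarICP

variable {K i L t d : ℕ} {a : ℕ → ℕ} {k : User K} {p : Msg K i}

instance finite_msg : Finite (Msg K i) :=
  ((Icc 1 K ×ˢ Icc 1 i).finite_toSet.subset fun _ hp => mem_product.mpr hp).to_subtype

theorem mem_barKnown_of_natCast_eq {v q : ℕ} (hv : v ∈ Icc 1 (i - 1)) (hq : q < L)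
    (h : (p.1.1 : ZMod K) = k.1 +
      (∑ j ∈ Icc 1 v, (a (angMod ((i : ℤ) + p.1.2 - j) i) + L) : ℕ) - q) :
    p ∈ barKnown K i L a k := by
  refine ⟨p.1.2, p.2.2, v, hv, L - q, mem_Icc.mpr (by omega), rfl, ?_⟩
  refine (angMod_eq_of_intCast_eq p.2.1 ?_).symm
  rw [h, sum_add_distrib, sum_const, Nat.card_Icc, smul_eq_mul]
  push_cast [hq.le]
  ring

theorem mem_barKnown_of_layerShift_le (ht : 1 ≤ t) (htp : t < p.1.2) (htd : layerShift L a t ≤ d)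
    (hdt : d < layerShift L a t + L) (hp : diagonal K i L a p = k.1 - d) :
    p ∈ barKnown K i L a k := by
  have hpi := (mem_Icc.mp p.2.2).2
  refine mem_barKnown_of_natCast_eq (v := p.1.2 - t) (q := d - layerShift L a t)
    (mem_Icc.mpr (by omega)) (by omega) ?_
  have hsum : ((layerShift L a t + _ : ℕ) : ZMod K) = _ :=
    congrArg Nat.cast (layerShift_add_sum_angMod ht (Nat.add_sub_of_le htp.le) hpi)
  rw [sub_eq_iff_eq_add.mp hp, ← hsum, Nat.cast_sub htd, Nat.cast_add]
  ring

theorem mem_barKnown_of_le_layerShift (hK : K = (i - 1) * L + ∑ j ∈ Icc 1 i, a j + 1)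
    (hpt : p.1.2 < t) (hti : t ≤ i) (hdt : d ≤ layerShift L a t) (htd : layerShift L a t < d + L)
    (hp : diagonal K i L a p = k.1 - d) : p ∈ barKnown K i L a k := by
  have hp1 := (mem_Icc.mp p.2.2).1
  refine mem_barKnown_of_natCast_eq (v := i + p.1.2 - t) (q := d + L - layerShift L a t - 1)
    (mem_Icc.mpr (by omega)) (by omega) ?_
  have hsum := layerShift_add_sum_angMod_wrap (L := L) (a := a) hp1 hpt (hti.trans i.le_succ)
    (by omega : t + (i + p.1.2 - t) = i + p.1.2)
  have hperiod := layerShift_succ_add_one (by omega) hK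
  have hoffset : ∑ j ∈ Icc 1 (i + p.1.2 - t), (a (angMod ((i : ℤ) + p.1.2 - j) i) + L) + d =
      K + layerShift L a p.1.2 + (d + L - layerShift L a t - 1) := by omega
  have hcast := congrArg (Nat.cast : ℕ → ZMod K) hoffset
  rw [Nat.cast_add, Nat.cast_add, Nat.cast_add, ZMod.natCast_self] at hcast
  rw [sub_eq_iff_eq_add.mp hp]
  linear_combination -hcast

theorem mem_barKnown_of_diagonal_eq (hL : 1 ≤ L)
    (hK : K = (i - 1) * L + ∑ j ∈ Icc 1 i, a j + 1) {q : Msg K i} (hp : p ∈ barWant K i k)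
    (hqp : diagonal K i L a q = diagonal K i L a p) (hne : q ≠ p) : q ∈ barKnown K i L a k := by
  have hq : diagonal K i L a q = k.1 - layerShift L a p.1.2 := by
    rw [hqp, diagonal, show p.1.1 = k.1 from hp]
  obtain ⟨hp1, hpi⟩ := mem_Icc.mp p.2.2
  rcases lt_trichotomy p.1.2 q.1.2 with hlt | heq | hgt
  · exact mem_barKnown_of_layerShift_le hp1 hlt le_rfl (by omega) hq
  · rw [diagonal, diagonal, heq, sub_left_inj] at hqp
    exact absurd (Subtype.ext (Prod.ext (eq_of_natCast_zmod_eq q.2.1 p.2.1 hqp) heq.symm)) hne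
  · exact mem_barKnown_of_le_layerShift hK hgt hpi le_rfl (by omega) hq

theorem mem_barKnown_of_notMem_unknownOffsets (hL : 1 ≤ L)
    (hK : K = (i - 1) * L + ∑ j ∈ Icc 1 i, a j + 1) (hdK : d < K) (hd : d ∉ unknownOffsets i L a)
    (hp : diagonal K i L a p = k.1 - d) : p ∈ barKnown K i L a k := by
  obtain ⟨hp1, hpi⟩ := mem_Icc.mp p.2.2
  have hperiod := layerShift_succ_add_one (hp1.trans hpi) hK
  obtain ⟨t, ht, htd, hdt⟩ := exists_layerShift_le_lt (L := L) (i := i) (a := a) (d := d) (by omega)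
  obtain ⟨ht1, hti⟩ := mem_Icc.mp ht
  have hsucc := layerShift_succ (L := L) (a := a) ht1
  simp only [unknownOffsets, mem_union, mem_biUnion, mem_Icc, mem_Ico, not_or, not_exists,
    not_and] at hd
  have hlower : layerShift L a t + a t < d := by
    by_contra! hle
    exact hd.1 t ⟨ht1, hti⟩ htd hle
  have hti' : t < i := by
    refine lt_of_le_of_ne hti ?_
    rintro rfl
    omega
  have hupper : d < layerShift L a t + L := by
    by_contra! hle
    exact hd.2 t ⟨ht1, hti'⟩ hle hdt
  rcases lt_or_ge t p.1.2 with htp | hpt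
  · exact mem_barKnown_of_layerShift_le ht1 htp htd hupper hp
  · exact mem_barKnown_of_le_layerShift hK (Nat.lt_succ_of_le hpt) hti' hdt.le
      (by rw [hsucc]; omega) hp

theorem ncard_diagonal_image_compl_barKnown_le (hL : 1 ≤ L)
    (hK : K = (i - 1) * L + ∑ j ∈ Icc 1 i, a j + 1) (k : User K) :
    (diagonal K i L a '' (barKnown K i L a k)ᶜ).ncard ≤ min (unknownOffsets i L a).card K := by
  have : NeZero K := ⟨by omega⟩
  refine le_min ?_ ((Set.ncard_le_card _).trans_eq (Nat.card_zmod K))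
  have hsubset : diagonal K i L a '' (barKnown K i L a k)ᶜ ⊆
      (fun d : ℕ => (k.1 - d : ZMod K)) '' unknownOffsets i L a := by
    rintro _ ⟨p, hp, rfl⟩
    let d : ℕ := ((k.1 : ZMod K) - diagonal K i L a p).val
    have hpd : diagonal K i L a p = k.1 - d := by
      rw [ZMod.natCast_zmod_val, sub_sub_cancel]
    refine ⟨d, ?_, hpd.symm⟩
    by_contra hd
    exact hp (mem_barKnown_of_notMem_unknownOffsets hL hK (ZMod.val_lt _) hd hpd)
  calc _ ≤ _ := Set.ncard_le_ncard hsubset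
    _ ≤ (unknownOffsets i L a : Set ℕ).ncard := Set.ncard_image_le
    _ = (unknownOffsets i L a).card := Set.ncard_coe_finset _

end BarICP

theorem stmt0_general (i L : ℕ) (hi : 1 ≤ i) (hL : 1 ≤ L) (a : ℕ → ℕ)
    (K : ℕ) (hK : K = (i - 1) * L + (∑ j ∈ Finset.Icc 1 i, a j) + 1) :
    optRate (barWant K i) (barKnown K i L a) ≤
      min (2 * ((K : ℝ) - ((i : ℝ) - 1) * (L : ℝ)) + (i : ℝ) - 2 - (a i : ℝ)) (K : ℝ) := by
  have : NeZero K := ⟨by omega⟩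
  have hrate : optRate (barWant K i) (barKnown K i L a) ≤
      (min (unknownOffsets i L a).card K : ℕ) :=
    optRate_le_of_localColoring
      (fun _ _ hp _ hqp hne => mem_barKnown_of_diagonal_eq hL hK hp hqp hne)
      (ncard_diagonal_image_compl_barKnown_le hL hK)
  rw [Nat.cast_min] at hrate
  refine hrate.trans (min_le_min_right _ ?_)
  have hcard : ((unknownOffsets i L a).card : ℝ) + a i ≤ 2 * (∑ j ∈ Icc 1 i, a j : ℕ) + i := by
    exact_mod_cast card_unknownOffsets_add_le hi
  have hKreal : (K : ℝ) = (i - 1) * L + (∑ j ∈ Icc 1 i, a j : ℕ) + 1 := by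
    rw [hK]
    push_cast [hi]
    ring
  linarith

/-- Theorem 1 of the paper: upper bound on the optimal broadcast
rate of the `(a_i,…,a_1)_L`-bar-ICP. -/
theorem stmt0 (i L : ℕ) (hi : 1 ≤ i) (hL : 1 ≤ L) (a : ℕ → ℕ)
    (hmax : ∀ j ∈ Finset.Icc 1 i, a j ≤ a i)
    (K : ℕ) (hK : K = (i - 1) * L + (∑ j ∈ Finset.Icc 1 i, a j) + 1) :
    optRate (barWant K i) (barKnown K i L a) ≤
      min (2 * ((K : ℝ) - ((i : ℝ) - 1) * (L : ℝ)) + (i : ℝ) - 2 - (a i : ℝ)) (K : ℝ) :=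
  stmt0_general i L hi hL a K hK
end

section
/- Let i ≥ 1, L ≥ 1 and nonnegative integers a_1,…,a_i be given, and set K = (i−1)L + Σ_{j=1}^{i} a_j + 1. Then the optimal broadcast rate R* of the (a_i,…,a_1)_L-bar-ICP satisfies R* ≥ Σ_{j=1}^{i} (a_j + 1) = K − (i−1)L + i − 1. -/
open Finset

/-!
The bound is a maximum-acyclic-induced-subgraph bound. If the messages of a finite set `S` can be
ranked so that each of them is wanted by a user who knows, among the messages of `S`, only some of
smaller rank, then a codeword together with the messages outside `S` determines those in `S`, one
rank after the other; fixing the messages outside `S` makes the encoder injective, so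
`2 ^ (|S| t) ≤ 2 ^ ℓ`.

For the bar-ICP take `S = {(b, t) : b ≤ a_{<i+t-1>_i} + 1}`, ranked by `b`. The messages of column
`t` known to user `k` lie at cyclic distance more than `a_{<i+t-1>_i}` and less than `K` ahead of
`k`, since `a_{<i+t-1>_i}` is the first summand of each of their offsets. The messages `(b, t)` of
`S` with `b ≥ k` are at most `a_{<i+t-1>_i}` ahead of `k`, so user `k` knows none of them.
As `t` runs over `[i]`, so does `<i+t-1>_i`, and hence `|S| = ∑ j, (a j + 1)`.
-/

section IndexCoding

variable {I U : Type} {W Kn : U → Set I} {S : Finset I} {t ℓ : ℕ}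

/-- A set of messages inducing an acyclic side-information graph: each message of `S` is wanted by
a user whose known messages in `S` precede it. Acyclicity is encoded by a rank function. -/
def IsAcyclicSet (W Kn : U → Set I) (S : Finset I) : Prop :=
  ∃ rank : I → ℕ, ∀ m ∈ S, ∃ u, m ∈ W u ∧ ∀ m' ∈ S, m' ∈ Kn u → rank m' < rank m

theorem IsAcyclicSet.eq_of_encode_eq (hS : IsAcyclicSet W Kn S)
    {E : (I → Fin t → Bool) → Fin ℓ → Bool}
    {D : ∀ u : U, (Fin ℓ → Bool) → (↥(Kn u) → Fin t → Bool) → (↥(W u) → Fin t → Bool)}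
    (hD : ∀ x u, D u (E x) (fun m => x m.1) = fun m => x m.1)
    {x y : I → Fin t → Bool} (hE : E x = E y) (hoff : ∀ m ∉ S, x m = y m) : x = y := by
  obtain ⟨rank, hrank⟩ := hS
  funext m
  induction h : rank m using Nat.strong_induction_on generalizing m with
  | _ n ih =>
    subst h
    by_cases hm : m ∈ S
    · obtain ⟨u, hmu, hlt⟩ := hrank m hm
      have hknown : (fun q : Kn u => x q.1) = fun q => y q.1 := by
        funext q
        by_cases hq : q.1 ∈ S
        · exact ih _ (hlt q.1 hq q.2) q.1 rfl
        · exact hoff q.1 hq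
      have hwanted : (fun q : W u => x q.1) = fun q => y q.1 := by
        rw [← hD x u, ← hD y u, hE, hknown]
      exact congrFun hwanted ⟨m, hmu⟩
    · exact hoff m hm

theorem IsAcyclicSet.card_mul_le (hS : IsAcyclicSet W Kn S) (h : ValidCode W Kn t ℓ) :
    #S * t ≤ ℓ := by
  classical
  obtain ⟨E, D, hD⟩ := h
  let extend : (S → Fin t → Bool) → I → Fin t → Bool := fun x =>
    Function.extend Subtype.val x fun _ _ => false
  have hinj : Function.Injective (E ∘ extend) := fun x y hxy =>
    Function.extend_injective Subtype.val_injective _ <| hS.eq_of_encode_eq hD hxy fun m hm => by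
      have hrange : ¬∃ q : S, q.1 = m := fun ⟨q, hq⟩ => hm (hq ▸ q.2)
      simp only [Function.extend_apply' _ _ _ hrange]
  have hcard := Fintype.card_le_of_injective _ hinj
  simp only [Fintype.card_fun, Fintype.card_bool, Fintype.card_fin, Fintype.card_coe,
    ← pow_mul] at hcard
  rw [mul_comm]
  exact (Nat.pow_le_pow_iff_right one_lt_two).1 hcard

theorem exists_validCode_one [Finite I] (W Kn : U → Set I) : ∃ ℓ, ValidCode W Kn 1 ℓ := by
  obtain ⟨n, ⟨e⟩⟩ := Finite.exists_equiv_fin I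
  refine ⟨n, fun x j => x (e.symm j) 0, fun _ y _ m _ => y (e m.1), fun x u => ?_⟩
  funext m j
  simp only [e.symm_apply_apply, Subsingleton.elim j 0]

theorem IsAcyclicSet.card_le_optRate [Finite I] (hS : IsAcyclicSet W Kn S) :
    (#S : ℝ) ≤ optRate W Kn := by
  refine le_csInf ?_ ?_
  · obtain ⟨ℓ, hℓ⟩ := exists_validCode_one W Kn
    exact ⟨_, 1, ℓ, le_rfl, hℓ, rfl⟩
  · rintro _ ⟨t, ℓ, ht, hcode, rfl⟩
    rw [le_div_iff₀ (Nat.cast_pos.2 ht)]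
    exact_mod_cast hS.card_mul_le hcode

end IndexCoding

section AngMod

variable {n : ℕ}

theorem angMod_modEq (hn : 0 < n) (m : ℤ) : angMod m n ≡ m [ZMOD n] := by
  unfold angMod
  split_ifs with h
  · simp only [Int.ModEq, Int.emod_self, h]
  · rw [Int.toNat_of_nonneg (Int.emod_nonneg _ (by omega))]
    exact Int.mod_modEq _ _

theorem angMod_mem_Icc (hn : 0 < n) (m : ℤ) : angMod m n ∈ Icc 1 n := by
  have hnonneg : 0 ≤ m % (n : ℤ) := Int.emod_nonneg _ (by omega)
  have hlt : m % (n : ℤ) < n := Int.emod_lt_of_pos _ (by omega)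
  unfold angMod
  rw [mem_Icc]
  split_ifs <;> omega

theorem eq_of_modEq_of_mem_Icc {x y : ℕ} (hx : x ∈ Icc 1 n) (hy : y ∈ Icc 1 n)
    (h : (x : ℤ) ≡ y [ZMOD n]) : x = y := by
  rw [mem_Icc] at hx hy
  exact (Int.natCast_modEq_iff.1 h).eq_of_abs_lt (by rw [abs_lt]; omega)

theorem sum_comp_angMod {M : Type*} [AddCommMonoid M] (f : ℕ → M) {g : ℕ → ℤ}
    (hg : ∀ x ∈ Icc 1 n, ∀ y ∈ Icc 1 n, g x ≡ g y [ZMOD n] → x = y) :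
    ∑ j ∈ Icc 1 n, f (angMod (g j) n) = ∑ j ∈ Icc 1 n, f j := by
  obtain rfl | hn := n.eq_zero_or_pos
  · rfl
  have hmaps : Set.MapsTo (fun j => angMod (g j) n) (Icc 1 n) (Icc 1 n) :=
    fun j _ => angMod_mem_Icc hn (g j)
  have hinj : Set.InjOn (fun j => angMod (g j) n) (Icc 1 n) := fun x hx y hy hxy =>
    hg x hx y hy <| (angMod_modEq hn (g x)).symm.trans <| by
      rw [show angMod (g x) n = angMod (g y) n from hxy]
      exact angMod_modEq hn (g y)
  exact sum_nbij _ hmaps hinj (surjOn_of_injOn_of_card_le _ hmaps hinj le_rfl) fun _ _ => rfl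

end AngMod

section BarICP

variable {K i L : ℕ} {a : ℕ → ℕ}

/-- The parameter `a_{<i+t-j>_i}`, the `j`-th summand of the offsets from a user to the messages of
column `t` it knows. -/
def gap (i : ℕ) (a : ℕ → ℕ) (t j : ℕ) : ℕ :=
  a (angMod ((i : ℤ) + (t : ℤ) - (j : ℤ)) i)

theorem sum_gap_right (i : ℕ) (a : ℕ → ℕ) (t : ℕ) :
    ∑ j ∈ Icc 1 i, gap i a t j = ∑ j ∈ Icc 1 i, a j :=
  sum_comp_angMod a fun _ hx _ hy h =>
    eq_of_modEq_of_mem_Icc hx hy (by simpa only [sub_sub_cancel] using h.sub_left (i + t : ℤ))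

theorem sum_gap_left (i : ℕ) (a : ℕ → ℕ) (j : ℕ) :
    ∑ t ∈ Icc 1 i, gap i a t j = ∑ t ∈ Icc 1 i, a t :=
  sum_comp_angMod a fun _ hx _ hy h =>
    eq_of_modEq_of_mem_Icc hx hy ((h.add_right_cancel' _).add_left_cancel' _)

theorem exists_offset_of_mem_knownIdx {k b t : ℕ} (hK : (i - 1) * L + ∑ j ∈ Icc 1 i, a j < K)
    (h : (b, t) ∈ knownIdx K i L a k) :
    ∃ d, gap i a t 1 < d ∧ d < K ∧ (b : ℤ) ≡ k + d [ZMOD K] := by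
  obtain ⟨_, -, v, hv, r, hr, rfl, hb⟩ := h
  simp only at hb
  rw [mem_Icc] at hv hr
  obtain ⟨w, rfl⟩ := Nat.exists_eq_add_of_le' hv.1
  have hfirst : gap i a t 1 ≤ ∑ j ∈ Icc 1 (w + 1), gap i a t j :=
    single_le_sum (fun _ _ => Nat.zero_le _) (mem_Icc.2 ⟨le_rfl, hv.1⟩)
  have hsum : ∑ j ∈ Icc 1 (w + 1), gap i a t j ≤ ∑ j ∈ Icc 1 i, a j :=
    (sum_le_sum_of_subset (Icc_subset_Icc_right (by omega))).trans_eq (sum_gap_right i a t)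
  have hblocks : w * L + L ≤ (i - 1) * L := by
    rw [← Nat.succ_mul]
    exact Nat.mul_le_mul_right L hv.2
  refine ⟨∑ j ∈ Icc 1 (w + 1), gap i a t j + w * L + r, by omega, by omega, ?_⟩
  rw [hb]
  convert angMod_modEq (by omega : 0 < K) _ using 1
  simp only [gap]
  push_cast
  ring

theorem lt_of_mem_knownIdx {k b t : ℕ} (hK : (i - 1) * L + ∑ j ∈ Icc 1 i, a j < K) (hk : 1 ≤ k)
    (hb : b ≤ gap i a t 1 + 1) (h : (b, t) ∈ knownIdx K i L a k) : b < k := by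
  obtain ⟨d, hgap, hd, hmod⟩ := exists_offset_of_mem_knownIdx hK h
  by_contra! hkb
  have hzero : (k : ℤ) + d - b = 0 :=
    Int.eq_zero_of_abs_lt_dvd hmod.dvd (by rw [abs_lt]; omega)
  omega

instance instFintypeMsg (K i : ℕ) : Fintype (Msg K i) :=
  Fintype.subtype (Icc 1 K ×ˢ Icc 1 i) fun _ => mem_product

/-- The messages `(b, t)` with `b ≤ a_{<i+t-1>_i} + 1`, the acyclic set that witnesses the lower
bound. -/
def staircase (K i : ℕ) (a : ℕ → ℕ) : Finset (Msg K i) :=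
  {m | m.1.1 ≤ gap i a m.1.2 1 + 1}

theorem isAcyclicSet_staircase (hK : (i - 1) * L + ∑ j ∈ Icc 1 i, a j < K) :
    IsAcyclicSet (barWant K i) (barKnown K i L a) (staircase K i a) :=
  ⟨fun m => m.1.1, fun m _ => ⟨⟨m.1.1, m.2.1⟩, rfl, fun _ hm' hknown =>
    lt_of_mem_knownIdx hK (mem_Icc.1 m.2.1).1 (mem_filter.1 hm').2 hknown⟩⟩

theorem card_staircase (hK : ∀ j ∈ Icc 1 i, a j < K) :
    #(staircase K i a) = ∑ j ∈ Icc 1 i, (a j + 1) := by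
  have hcolumn : ∀ t ∈ Icc 1 i, #{b ∈ Icc 1 K | b ≤ gap i a t 1 + 1} = gap i a t 1 + 1 := by
    intro t ht
    have hi : 0 < i := by rw [mem_Icc] at ht; omega
    have hgap : gap i a t 1 < K := hK _ (angMod_mem_Icc hi _)
    rw [show ({b ∈ Icc 1 K | b ≤ gap i a t 1 + 1} : Finset ℕ) = Icc 1 (gap i a t 1 + 1) by
      ext b; simp only [mem_filter, mem_Icc]; omega, Nat.card_Icc, Nat.add_sub_cancel]
  calc #(staircase K i a)
      = ∑ p ∈ Icc 1 K ×ˢ Icc 1 i, if p.1 ≤ gap i a p.2 1 + 1 then 1 else 0 := by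
        rw [staircase, card_filter, sum_subtype _ fun _ => mem_product]
    _ = ∑ t ∈ Icc 1 i, #{b ∈ Icc 1 K | b ≤ gap i a t 1 + 1} := by
        simp only [sum_product_right, card_filter]
    _ = ∑ t ∈ Icc 1 i, (gap i a t 1 + 1) := sum_congr rfl hcolumn
    _ = ∑ j ∈ Icc 1 i, (a j + 1) := by
        rw [sum_add_distrib, sum_gap_left, ← sum_add_distrib]

end BarICP

/-- Theorem 2 of the paper: lower bound on the optimal broadcast
rate of the `(a_i,…,a_1)_L`-bar-ICP:
`R* ≥ Σ_{j=1}^{i} (a_j + 1) = K − (i−1)L + i − 1`. -/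
theorem stmt1 (i L : ℕ) (hi : 1 ≤ i) (hL : 1 ≤ L) (a : ℕ → ℕ)
    (K : ℕ) (hK : K = (i - 1) * L + (∑ j ∈ Finset.Icc 1 i, a j) + 1) :
    (∑ j ∈ Finset.Icc 1 i, ((a j : ℝ) + 1)) ≤ optRate (barWant K i) (barKnown K i L a) ∧
    (∑ j ∈ Finset.Icc 1 i, ((a j : ℝ) + 1)) =
      (K : ℝ) - ((i : ℝ) - 1) * (L : ℝ) + (i : ℝ) - 1 := by
  have ha : ∀ j ∈ Icc 1 i, a j < K := fun j hj => by
    have : a j ≤ ∑ j ∈ Icc 1 i, a j := single_le_sum (fun k _ => Nat.zero_le (a k)) hj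
    omega
  constructor
  · calc ∑ j ∈ Icc 1 i, ((a j : ℝ) + 1)
        = (#(staircase K i a) : ℝ) := by rw [card_staircase ha]; push_cast; rfl
      _ ≤ optRate (barWant K i) (barKnown K i L a) :=
        (isAcyclicSet_staircase (by omega)).card_le_optRate
  · rw [hK, sum_add_distrib, sum_const, Nat.card_Icc]
    push_cast [Nat.cast_sub hi, Nat.add_sub_cancel, nsmul_eq_mul]
    ring
end

section
/- Let i ≥ 1, L ≥ 1 and a nonnegative integer a_i be given, set a_1 = a_2 = … = a_{i−1} = 0 and K = (i−1)L + a_i + 1. Then the optimal broadcast rate R*_1 of the (a_i,0,…,0)_L-bar-ICP equals exactly K − (i−1)L + i − 1. -/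
open Finset

/-!
Two general bounds meet. If the messages of a set `S` can be ranked so that each of them is wanted
by a user knowing only lower-ranked members of `S`, then `S` can be recovered from the codeword by
induction on the rank, so the rate is at least `#S`. Conversely, place the messages at points of a
field so that each user's unknown messages occupy at most `d` points, no wanted message sharing its
point with another unknown one; then the first `d` moments of the message values form a code of
rate `d`, decoded by Lagrange interpolation.

In the `(A,0,…,0)_L`-bar-ICP with `i = n + 1`, user `k` fails to know `(b, s + 1)` exactly when the
cyclic distance from `k` to `b` is `0` or lies in `(s L, s L + A]`. Placing `(b, s + 1)` at
`b - s L` modulo `K = n L + A + 1` therefore sends the unknown unwanted messages of user `k` into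
`k + [1, A]` and its `n + 1` wanted ones to the distinct points `k - s L` outside it, whence
`d = A + n + 1`. The messages `(1, t)` together with `(b, 1)` for `2 ≤ b ≤ A + 1`, ranked by their
first index, give the matching lower bound.
-/

section IndexCoding

variable {I U : Type} {W Kn : U → Set I} {t ℓ d : ℕ}

lemma validCode_iff_exists_eqOn :
    ValidCode W Kn t ℓ ↔ ∃ E : (I → Fin t → Bool) → Fin ℓ → Bool,
      ∀ u x y, E x = E y → Set.EqOn x y (Kn u) → Set.EqOn x y (W u) := by
  constructor
  · rintro ⟨E, D, hD⟩
    refine ⟨E, fun u x y hE hKn m hm => ?_⟩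
    have side_eq : (fun m : Kn u => x m) = fun m : Kn u => y m := funext fun m => hKn m.2
    have decoded_eq : (fun m : W u => x m) = fun m : W u => y m := by
      rw [← hD x u, ← hD y u, hE, side_eq]
    exact congrFun decoded_eq ⟨m, hm⟩
  · rintro ⟨E, hE⟩
    let received (u : U) (x : I → Fin t → Bool) := (E x, (Kn u).domRestrict x)
    have factors (u : U) : ((W u).domRestrict (π := fun _ => Fin t → Bool)).FactorsThrough
        (received u) := fun x y hxy =>
      Set.domRestrict_eq_domRestrict_iff.2
        (hE u x y (congrArg Prod.fst hxy)
          (Set.domRestrict_eq_domRestrict_iff.1 (congrArg Prod.snd hxy)))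
    exact ⟨E, fun u c s => Function.extend (received u) (W u).domRestrict default (c, s),
      fun x u => (factors u).extend_apply default x⟩

theorem ValidCode.card_mul_le {α : Type*} [LT α] [WellFoundedLT α] (h : ValidCode W Kn t ℓ)
    {S : Finset I} (rank : I → α)
    (hS : ∀ m ∈ S, ∃ u, m ∈ W u ∧ ∀ m' ∈ S, m' ∈ Kn u → rank m' < rank m) :
    #S * t ≤ ℓ := by
  classical
  obtain ⟨E, hE⟩ := validCode_iff_exists_eqOn.1 h
  have determined {x y : I → Fin t → Bool} (hxy : E x = E y) (hout : ∀ m ∉ S, x m = y m) :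
      ∀ m ∈ S, x m = y m := by
    intro m
    induction m using (InvImage.wf rank wellFounded_lt).induction with
    | _ m ih =>
      intro hm
      obtain ⟨u, hmW, hlt⟩ := hS m hm
      refine hE u x y hxy (fun m' hm' => ?_) hmW
      by_cases hm'S : m' ∈ S
      · exact ih m' (hlt m' hm'S hm') hm'S
      · exact hout m' hm'S
  let extendZero (z : S → Fin t → Bool) : I → Fin t → Bool := Function.extend Subtype.val z default
  have extendZero_apply (z : S → Fin t → Bool) (m : S) : extendZero z m = z m :=
    Subtype.val_injective.extend_apply z default m
  have encode_injective : Function.Injective (E ∘ extendZero) := by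
    intro z z' hzz'
    have hout : ∀ m ∉ S, extendZero z m = extendZero z' m := fun m hm => by
      have hm' : ¬ ∃ s : S, (s : I) = m := by simpa using hm
      simp only [extendZero, Function.extend_apply' _ _ _ hm']
    funext m
    rw [← extendZero_apply z, ← extendZero_apply z', determined hzz' hout m m.2]
  have card_le : 2 ^ (t * #S) ≤ 2 ^ ℓ := by
    simpa [pow_mul] using Fintype.card_le_of_injective _ encode_injective
  rw [mul_comm]
  exact (Nat.pow_le_pow_iff_right one_lt_two).1 card_le

theorem optRate_eq_natCast (hlower : ∀ t ℓ, ValidCode W Kn t ℓ → d * t ≤ ℓ) (ht : 1 ≤ t)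
    (hupper : ValidCode W Kn t (d * t)) : optRate W Kn = d := by
  refine IsLeast.csInf_eq ⟨⟨t, d * t, ht, hupper, ?_⟩, ?_⟩
  · rw [Nat.cast_mul, mul_div_cancel_right₀ _ (by positivity)]
  · rintro _ ⟨t', ℓ, ht', hcode, rfl⟩
    rw [le_div_iff₀ (by positivity)]
    exact_mod_cast hlower t' ℓ hcode

end IndexCoding

section MomentCode

lemma sum_filter_eq_zero_of_sum_pow_mul_eq_zero {F ι : Type*} [Field F] [DecidableEq F]
    {s : Finset ι} {v z : ι → F} (hz : ∀ j < #(s.image v), ∑ m ∈ s, v m ^ j * z m = 0) (p : F) :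
    ∑ m ∈ s with v m = p, z m = 0 := by
  by_cases hp : p ∈ s.image v
  swap
  · rw [filter_false_of_mem fun m hm hmp => hp (mem_image.2 ⟨m, hm, hmp⟩), sum_empty]
  let δ : Polynomial F := Lagrange.basis (s.image v) id p
  have eval_δ : ∀ m ∈ s, δ.eval (v m) = if v m = p then 1 else 0 := by
    intro m hm
    split_ifs with hmp
    · rw [hmp]
      exact Lagrange.eval_basis_self Function.injective_id.injOn hp
    · exact Lagrange.eval_basis_of_ne (v := id) (Ne.symm hmp) (mem_image_of_mem v hm)
  have natDegree_δ : δ.natDegree < #(s.image v) := by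
    have h : δ.natDegree = #(s.image v) - 1 :=
      Polynomial.natDegree_eq_of_degree_eq_some
        (Lagrange.degree_basis Function.injective_id.injOn hp)
    have := card_pos.2 ⟨p, hp⟩
    lia
  calc ∑ m ∈ s with v m = p, z m
      = ∑ m ∈ s, δ.eval (v m) * z m := by
        rw [sum_filter]
        exact sum_congr rfl fun m hm => by rw [eval_δ m hm, ite_mul, one_mul, zero_mul]
    _ = ∑ j ∈ range (#(s.image v)), δ.coeff j * ∑ m ∈ s, v m ^ j * z m := by
        simp only [Polynomial.eval_eq_sum_range' natDegree_δ, sum_mul, mul_sum, mul_assoc]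
        exact sum_comm
    _ = 0 := sum_eq_zero fun j hj => by rw [hz j (mem_range.1 hj), mul_zero]

variable {I U : Type} [Finite I] {W Kn : U → Set I} {t d : ℕ}

lemma validCode_of_field_placement {F : Type*} [Field F] (e : (Fin t → Bool) ≃ F) (v : I → F)
    (hcard : ∀ u, (v '' (Kn u)ᶜ).ncard ≤ d)
    (hsep : ∀ u, ∀ m ∈ W u, ∀ m' ∉ Kn u, v m' = v m → m' = m) :
    ValidCode W Kn t (d * t) := by
  classical
  have := Fintype.ofFinite I
  let pack : (Fin d → F) ≃ (Fin (d * t) → Bool) :=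
    ((Equiv.refl _).arrowCongr e.symm).trans <|
      (Equiv.curry _ _ _).symm.trans (finProdFinEquiv.arrowCongr (Equiv.refl _))
  refine validCode_iff_exists_eqOn.2
    ⟨fun x => pack fun j => ∑ m, v m ^ (j : ℕ) * e (x m), fun u x y hxy hKn m₀ hm₀ => ?_⟩
  by_cases hm₀Kn : m₀ ∈ Kn u
  · exact hKn hm₀Kn
  let unknown : Finset I := {m | m ∉ Kn u}
  let z (m : I) : F := e (x m) - e (y m)
  have image_unknown : #(unknown.image v) ≤ d := by
    simpa [unknown, ← Set.ncard_coe_finset, Set.compl_def] using hcard u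
  have moments_eq_zero : ∀ j < #(unknown.image v), ∑ m ∈ unknown, v m ^ j * z m = 0 := by
    intro j hj
    have moments_eq := congrFun (pack.injective hxy) ⟨j, hj.trans_le image_unknown⟩
    calc ∑ m ∈ unknown, v m ^ j * z m = ∑ m, v m ^ j * z m :=
          sum_subset (subset_univ _) fun m _ hm => by
            simp [z, hKn (show m ∈ Kn u by simpa [unknown] using hm)]
      _ = 0 := by simpa only [z, mul_sub, sum_sub_distrib, sub_eq_zero] using moments_eq
  have fiber_eq : {m ∈ unknown | v m = v m₀} = {m₀} := by
    ext m
    simp only [unknown, mem_filter, mem_univ, true_and, mem_singleton]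
    exact ⟨fun h => hsep u m₀ hm₀ m h.1 h.2, by rintro rfl; exact ⟨hm₀Kn, rfl⟩⟩
  have z_eq_zero : z m₀ = 0 := by
    simpa only [fiber_eq, sum_singleton] using
      sum_filter_eq_zero_of_sum_pow_mul_eq_zero moments_eq_zero (v m₀)
  exact e.injective (sub_eq_zero.1 z_eq_zero)

theorem validCode_of_placement {P : Type*} [Fintype P] (ht : t ≠ 0) (hP : Fintype.card P ≤ 2 ^ t)
    (c : I → P) (hcard : ∀ u, (c '' (Kn u)ᶜ).ncard ≤ d)
    (hsep : ∀ u, ∀ m ∈ W u, ∀ m' ∉ Kn u, c m' = c m → m' = m) :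
    ValidCode W Kn t (d * t) := by
  have := Fintype.ofFinite (GaloisField 2 t)
  have card_F : Fintype.card (GaloisField 2 t) = 2 ^ t := by
    rw [← Nat.card_eq_fintype_card, GaloisField.card 2 t ht]
  let e : (Fin t → Bool) ≃ GaloisField 2 t := Fintype.equivOfCardEq (by simp [card_F])
  obtain ⟨α⟩ : Nonempty (P ↪ GaloisField 2 t) :=
    Function.Embedding.nonempty_of_card_le (card_F ▸ hP)
  refine validCode_of_field_placement e (α ∘ c) (fun u => ?_)
    fun u m hm m' hm' h => hsep u m hm m' hm' (α.injective h)
  rw [Set.image_comp, Set.ncard_image_of_injective _ α.injective]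
  exact hcard u

end MomentCode

section AngMod

lemma eq_angMod_iff {m : ℤ} {n b : ℕ} (hb : b ∈ Icc 1 n) :
    b = angMod m n ↔ (b : ZMod n) = (m : ZMod n) := by
  obtain ⟨hb1, hbn⟩ := mem_Icc.1 hb
  have emod_nonneg : 0 ≤ m % (n : ℤ) := Int.emod_nonneg _ (by lia)
  have emod_lt : m % (n : ℤ) < n := Int.emod_lt_of_pos _ (by lia)
  have emod_b : (b : ℤ) % n = if b = n then 0 else (b : ℤ) := by
    split_ifs with h
    · rw [h, Int.emod_self]
    · exact Int.emod_eq_of_lt (by lia) (by lia)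
  rw [← Int.cast_natCast b, ZMod.intCast_eq_intCast_iff', emod_b, angMod]
  split_ifs <;> lia

lemma natCast_injOn_Icc (n : ℕ) : Set.InjOn (Nat.cast : ℕ → ZMod n) (Icc 1 n) :=
  fun b hb c hc h => by
    have h' : (b : ZMod n) = ((c : ℤ) : ZMod n) := by exact_mod_cast h
    exact ((eq_angMod_iff hb).2 h').trans ((eq_angMod_iff hc).2 (Int.cast_natCast c).symm).symm

variable {n : ℕ} {a : ℕ → ℕ}

lemma apply_angMod_succ (ha : ∀ j, 1 ≤ j → j ≤ n → a j = 0) (m : ℤ) :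
    a (angMod m (n + 1)) = if ((n + 1 : ℕ) : ℤ) ∣ m then a (n + 1) else 0 := by
  have emod_nonneg : 0 ≤ m % ((n + 1 : ℕ) : ℤ) := Int.emod_nonneg _ (by lia)
  have emod_lt : m % ((n + 1 : ℕ) : ℤ) < (n + 1 : ℕ) := Int.emod_lt_of_pos _ (by lia)
  simp only [angMod, Int.dvd_iff_emod_eq_zero]
  split_ifs with h
  · rfl
  · exact ha _ (by lia) (by lia)

lemma sum_apply_angMod_succ (ha : ∀ j, 1 ≤ j → j ≤ n → a j = 0) {s v : ℕ} (hs : s ≤ n)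
    (hv : v ≤ n) :
    ∑ j ∈ Icc 1 v, (a (angMod (((n + 1 : ℕ) : ℤ) + ((s + 1 : ℕ) : ℤ) - (j : ℤ)) (n + 1)) : ℤ) =
      if s < v then (a (n + 1) : ℤ) else 0 := by
  have term_eq : ∀ j ∈ Icc 1 v,
      (a (angMod (((n + 1 : ℕ) : ℤ) + ((s + 1 : ℕ) : ℤ) - (j : ℤ)) (n + 1)) : ℤ) =
        if j = s + 1 then (a (n + 1) : ℤ) else 0 := by
    intro j hj
    have dvd_iff : ((n + 1 : ℕ) : ℤ) ∣ ((n + 1 : ℕ) : ℤ) + ((s + 1 : ℕ) : ℤ) - (j : ℤ) ↔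
        j = s + 1 := by
      rw [add_sub_assoc, dvd_add_right dvd_rfl]
      refine ⟨fun h => ?_, by rintro rfl; simp⟩
      obtain ⟨hj1, hjv⟩ := mem_Icc.1 hj
      have := Int.eq_zero_of_abs_lt_dvd h (abs_lt.2 ⟨by lia, by lia⟩)
      lia
    simp only [apply_angMod_succ ha, dvd_iff, Nat.cast_ite, Nat.cast_zero]
  simp only [sum_congr rfl term_eq, sum_ite_eq', mem_Icc, le_add_iff_nonneg_left, zero_le,
    true_and, Nat.succ_le_iff]

end AngMod

lemma exists_mul_add_succ_iff {L lo hi e : ℕ} :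
    (∃ w, lo ≤ w ∧ w < hi ∧ ∃ q < L, e = w * L + q + 1) ↔ lo * L < e ∧ e ≤ hi * L := by
  constructor
  · rintro ⟨w, hlo, hhi, q, hq, rfl⟩
    have h₁ : lo * L ≤ w * L := Nat.mul_le_mul_right L hlo
    have h₂ : (w + 1) * L ≤ hi * L := Nat.mul_le_mul_right L hhi
    rw [add_one_mul] at h₂
    lia
  · rintro ⟨hlo, hhi⟩
    have hL : 0 < L := Nat.pos_of_ne_zero (by rintro rfl; lia)
    refine ⟨(e - 1) / L, (Nat.le_div_iff_mul_le hL).2 (by lia),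
      (Nat.div_lt_iff_lt_mul hL).2 (by lia), (e - 1) % L, Nat.mod_lt _ hL, ?_⟩
    rw [Nat.div_add_mod']
    lia

section BarICP

variable {n L K : ℕ} {a : ℕ → ℕ}

lemma mem_knownIdx_iff_exists (ha : ∀ j, 1 ≤ j → j ≤ n → a j = 0) {k b s : ℕ}
    (hb : b ∈ Icc 1 K) (hs : s ≤ n) :
    (b, s + 1) ∈ knownIdx K (n + 1) L a k ↔ ∃ w < n, ∃ q < L,
      (b : ZMod K) - k = (((if s ≤ w then a (n + 1) else 0) + (w * L + q + 1) : ℕ) : ZMod K) := by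
  have index_eq_iff {w q : ℕ} (hw : w < n) :
      b = angMod ((k : ℤ) + (∑ j ∈ Icc 1 (w + 1),
          (a (angMod (((n + 1 : ℕ) : ℤ) + ((s + 1 : ℕ) : ℤ) - (j : ℤ)) (n + 1)) : ℤ))
          + (((w + 1 : ℕ) : ℤ) - 1) * (L : ℤ) + ((q + 1 : ℕ) : ℤ)) K ↔
        (b : ZMod K) - k = (((if s ≤ w then a (n + 1) else 0) + (w * L + q + 1) : ℕ) : ZMod K) := by
    rw [eq_angMod_iff hb, sum_apply_angMod_succ ha hs hw, sub_eq_iff_eq_add']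
    simp only [Nat.lt_succ_iff]
    push_cast
    ring_nf
  constructor
  · rintro ⟨_, -, v, hv, r, hr, rfl, hbv⟩
    obtain ⟨w, rfl⟩ := Nat.exists_eq_add_of_le' (mem_Icc.1 hv).1
    obtain ⟨q, rfl⟩ := Nat.exists_eq_add_of_le' (mem_Icc.1 hr).1
    have hw : w < n := (mem_Icc.1 hv).2
    exact ⟨w, hw, q, (mem_Icc.1 hr).2, (index_eq_iff hw).1 hbv⟩
  · rintro ⟨w, hw, q, hq, h⟩
    exact ⟨s + 1, by simpa using hs, w + 1, by simpa using hw, q + 1, by simpa using hq, rfl,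
      (index_eq_iff hw).2 h⟩

lemma notMem_knownIdx_iff (ha : ∀ j, 1 ≤ j → j ≤ n → a j = 0) (hK : K = n * L + a (n + 1) + 1)
    {k b s : ℕ} (hb : b ∈ Icc 1 K) (hs : s ≤ n) :
    (b, s + 1) ∉ knownIdx K (n + 1) L a k ↔
      ((b : ZMod K) - k).val = 0 ∨
        ((b : ZMod K) - k).val ∈ Ioc (s * L) (s * L + a (n + 1)) := by
  have : NeZero K := ⟨by lia⟩
  set e := ((b : ZMod K) - k).val
  have he_lt : e < K := ZMod.val_lt _
  have := Nat.mul_le_mul_right L hs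
  have sub_eq_natCast_iff {c : ℕ} (hc : c < K) : (b : ZMod K) - k = c ↔ e = c := by
    rw [← (ZMod.val_injective K).eq_iff, ZMod.val_natCast_of_lt hc]
  have block_le {w q : ℕ} (hw : w < n) (hq : q < L) : w * L + q + 1 ≤ n * L :=
    (exists_mul_add_succ_iff.1 ⟨w, le_rfl, hw, q, hq, rfl⟩).2
  have known_iff : (b, s + 1) ∈ knownIdx K (n + 1) L a k ↔
      (∃ w, 0 ≤ w ∧ w < s ∧ ∃ q < L, e = w * L + q + 1) ∨
        ∃ w, s ≤ w ∧ w < n ∧ ∃ q < L, e - a (n + 1) = w * L + q + 1 := by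
    rw [mem_knownIdx_iff_exists ha hb hs]
    constructor
    · rintro ⟨w, hw, q, hq, h⟩
      have := block_le hw hq
      split_ifs at h with hsw <;> rw [sub_eq_natCast_iff (by lia)] at h
      · exact Or.inr ⟨w, hsw, hw, q, hq, by lia⟩
      · exact Or.inl ⟨w, by lia, by lia, q, hq, by lia⟩
    · rintro (⟨w, -, hw, q, hq, h⟩ | ⟨w, hsw, hw, q, hq, h⟩)
      · refine ⟨w, by lia, q, hq, ?_⟩
        have := block_le (hw.trans_le hs) hq
        rw [if_neg (by lia), sub_eq_natCast_iff (by lia)]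
        lia
      · refine ⟨w, hw, q, hq, ?_⟩
        have := block_le hw hq
        rw [if_pos hsw, sub_eq_natCast_iff (by lia)]
        lia
  rw [known_iff, exists_mul_add_succ_iff, exists_mul_add_succ_iff, mem_Ioc]
  lia

/-- The point of `ZMod K` at which the upper-bound code places message `(b, t)`, namely
`b - (t - 1) L`: it aligns the interference seen by each user. -/
def barPoint (K i L : ℕ) (m : Msg K i) : ZMod K :=
  (m.1.1 : ZMod K) - ((m.1.2 : ZMod K) - 1) * L

lemma barPoint_of_snd_eq {i s : ℕ} {m : Msg K i} (hm : m.1.2 = s + 1) :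
    barPoint K i L m = (m.1.1 : ZMod K) - (s * L : ℕ) := by
  simp [barPoint, hm]

lemma Msg.exists_snd_eq_succ (m : Msg K (n + 1)) : ∃ s ≤ n, m.1.2 = s + 1 := by
  obtain ⟨h₁, h₂⟩ := mem_Icc.1 m.2.2
  exact ⟨m.1.2 - 1, by lia, by lia⟩

lemma eq_or_barPoint_eq_of_notMem_barKnown (ha : ∀ j, 1 ≤ j → j ≤ n → a j = 0)
    (hK : K = n * L + a (n + 1) + 1) {u : User K} {m : Msg K (n + 1)}
    (hm : m ∉ barKnown K (n + 1) L a u) :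
    m.1.1 = u.1 ∨ ∃ f ∈ Icc 1 (a (n + 1)), barPoint K (n + 1) L m = (u.1 : ZMod K) + f := by
  have : NeZero K := ⟨by lia⟩
  obtain ⟨s, hs, hms⟩ := m.exists_snd_eq_succ
  have hm' : (m.1.1, s + 1) ∉ knownIdx K (n + 1) L a u.1 := hms ▸ hm
  rw [notMem_knownIdx_iff ha hK m.2.1 hs, mem_Ioc] at hm'
  set e := ((m.1.1 : ZMod K) - u.1).val
  have cast_e : ((e : ℕ) : ZMod K) = (m.1.1 : ZMod K) - u.1 := ZMod.natCast_zmod_val _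
  rcases hm' with he | ⟨he_lt, he_le⟩
  · rw [he, Nat.cast_zero, eq_comm, sub_eq_zero] at cast_e
    exact Or.inl (natCast_injOn_Icc K m.2.1 u.2 cast_e)
  · refine Or.inr ⟨e - s * L, mem_Icc.2 (by lia), ?_⟩
    rw [barPoint_of_snd_eq hms, Nat.cast_sub he_lt.le, cast_e]
    ring

lemma ncard_barPoint_image_compl_barKnown_le (ha : ∀ j, 1 ≤ j → j ≤ n → a j = 0)
    (hK : K = n * L + a (n + 1) + 1) (u : User K) :
    (barPoint K (n + 1) L '' (barKnown K (n + 1) L a u)ᶜ).ncard ≤ a (n + 1) + n + 1 := by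
  let wanted : Finset (ZMod K) := (range (n + 1)).image fun s : ℕ => (u.1 : ZMod K) - (s * L : ℕ)
  let interference : Finset (ZMod K) := (Icc 1 (a (n + 1))).image fun f : ℕ => (u.1 : ZMod K) + f
  have image_subset : barPoint K (n + 1) L '' (barKnown K (n + 1) L a u)ᶜ ⊆
      (interference ∪ wanted : Finset (ZMod K)) := by
    rintro _ ⟨m, hm, rfl⟩
    rcases eq_or_barPoint_eq_of_notMem_barKnown ha hK hm with hmu | ⟨f, hf, hmf⟩
    · obtain ⟨s, hs, hms⟩ := m.exists_snd_eq_succ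
      refine mem_union_right _ (mem_image.2 ⟨s, mem_range_succ_iff.2 hs, ?_⟩)
      rw [barPoint_of_snd_eq hms, hmu]
    · exact mem_union_left _ (mem_image.2 ⟨f, hf, hmf.symm⟩)
  calc (barPoint K (n + 1) L '' (barKnown K (n + 1) L a u)ᶜ).ncard
      ≤ #(interference ∪ wanted) := by
        rw [← Set.ncard_coe_finset]
        exact Set.ncard_le_ncard image_subset (finite_toSet _)
    _ ≤ #interference + #wanted := card_union_le _ _
    _ ≤ #(Icc 1 (a (n + 1))) + #(range (n + 1)) := add_le_add card_image_le card_image_le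
    _ = a (n + 1) + n + 1 := by rw [Nat.card_Icc, card_range, Nat.add_sub_cancel, add_assoc]

lemma eq_of_barPoint_eq_of_notMem_barKnown (hL : 1 ≤ L) (ha : ∀ j, 1 ≤ j → j ≤ n → a j = 0)
    (hK : K = n * L + a (n + 1) + 1) {u : User K} {m m' : Msg K (n + 1)}
    (hm : m ∈ barWant K (n + 1) u) (hm' : m' ∉ barKnown K (n + 1) L a u)
    (h : barPoint K (n + 1) L m' = barPoint K (n + 1) L m) : m' = m := by
  obtain ⟨s, hs, hms⟩ := m.exists_snd_eq_succ
  have hmu : m.1.1 = u.1 := hm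
  have hsL : s * L ≤ n * L := Nat.mul_le_mul_right L hs
  rcases eq_or_barPoint_eq_of_notMem_barKnown ha hK hm' with hmu' | ⟨f, hf, hmf⟩
  · obtain ⟨s', hs', hms'⟩ := m'.exists_snd_eq_succ
    have hsL' : s' * L ≤ n * L := Nat.mul_le_mul_right L hs'
    rw [barPoint_of_snd_eq hms, barPoint_of_snd_eq hms', hmu, hmu', sub_right_inj,
      ZMod.natCast_eq_natCast_iff', Nat.mod_eq_of_lt (by lia), Nat.mod_eq_of_lt (by lia)] at h
    have hss' : s' = s := Nat.eq_of_mul_eq_mul_right hL h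
    exact Subtype.ext (Prod.ext (hmu'.trans hmu.symm) (by rw [hms, hms', hss']))
  · exfalso
    rw [barPoint_of_snd_eq hms, hmu] at h
    have cast_eq_zero : ((f + s * L : ℕ) : ZMod K) = 0 := by
      push_cast at h ⊢
      linear_combination h - hmf
    obtain ⟨hf1, hfA⟩ := mem_Icc.1 hf
    have K_le := Nat.le_of_dvd (by lia) ((ZMod.natCast_eq_zero_iff _ _).1 cast_eq_zero)
    lia

theorem validCode_bar (hL : 1 ≤ L) (ha : ∀ j, 1 ≤ j → j ≤ n → a j = 0)
    (hK : K = n * L + a (n + 1) + 1) :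
    ValidCode (barWant K (n + 1)) (barKnown K (n + 1) L a) K ((a (n + 1) + n + 1) * K) := by
  have : NeZero K := ⟨by lia⟩
  have : Finite (Msg K (n + 1)) :=
    Set.Finite.subset (finite_toSet (Icc 1 K ×ˢ Icc 1 (n + 1))) fun p hp => mem_product.2 hp
  exact validCode_of_placement (NeZero.ne K) (by rw [ZMod.card]; exact Nat.lt_two_pow_self.le)
    (barPoint K (n + 1) L) (ncard_barPoint_image_compl_barKnown_le ha hK)
    fun _ _ hm _ hm' => eq_of_barPoint_eq_of_notMem_barKnown hL ha hK hm hm'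

lemma notMem_knownIdx_of_le (ha : ∀ j, 1 ≤ j → j ≤ n → a j = 0) (hK : K = n * L + a (n + 1) + 1)
    {k b s : ℕ} (hk : 1 ≤ k) (hkb : k ≤ b) (hb : b ≤ a (n + 1) + 1) (hs : s ≤ n)
    (h : b = k ∨ s = 0) : (b, s + 1) ∉ knownIdx K (n + 1) L a k := by
  have val_eq : ((b : ZMod K) - k).val = b - k := by
    rw [← Nat.cast_sub hkb, ZMod.val_natCast_of_lt (by lia)]
  rw [notMem_knownIdx_iff ha hK (mem_Icc.2 (by lia)) hs, val_eq, mem_Ioc]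
  rcases h with rfl | rfl
  · exact Or.inl (Nat.sub_self b)
  · lia

/-- Messages recoverable one user at a time in the bar-ICP with `i = n + 1`: all those of user `1`
and the first one of each user `2, …, A + 1`. -/
def barAcyclic (K n A : ℕ) : Finset (Msg K (n + 1)) :=
  Finset.subtype _ ({1} ×ˢ Icc 1 (n + 1) ∪ Icc 2 (A + 1) ×ˢ {1})

lemma card_barAcyclic {A : ℕ} (hA : A + 1 ≤ K) : #(barAcyclic K n A) = A + n + 1 := by
  have disjoint_parts : Disjoint (({1} : Finset ℕ) ×ˢ Icc 1 (n + 1)) (Icc 2 (A + 1) ×ˢ {1}) := by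
    simp only [disjoint_left, mem_product, mem_singleton, mem_Icc]
    lia
  rw [barAcyclic, card_subtype, filter_true_of_mem, card_union_of_disjoint disjoint_parts]
  · simp only [card_product, card_singleton, Nat.card_Icc]
    lia
  · simp only [mem_union, mem_product, mem_singleton, mem_Icc]
    lia

theorem mul_le_of_validCode_bar (ha : ∀ j, 1 ≤ j → j ≤ n → a j = 0)
    (hK : K = n * L + a (n + 1) + 1) {t ℓ : ℕ}
    (h : ValidCode (barWant K (n + 1)) (barKnown K (n + 1) L a) t ℓ) :
    (a (n + 1) + n + 1) * t ≤ ℓ := by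
  rw [← card_barAcyclic (K := K) (by lia)]
  refine h.card_mul_le (fun m => m.1.1) fun m hm => ⟨⟨m.1.1, m.2.1⟩, rfl, fun m' hm' hknown => ?_⟩
  obtain ⟨s, hs, hms⟩ := m'.exists_snd_eq_succ
  have hknown' : (m'.1.1, s + 1) ∈ knownIdx K (n + 1) L a m.1.1 := hms ▸ hknown
  have hm1 := mem_Icc.1 m.2.1
  simp only [barAcyclic, mem_subtype, mem_union, mem_product, mem_singleton, mem_Icc] at hm hm'
  by_contra! hle
  exact notMem_knownIdx_of_le ha hK hm1.1 hle (by lia) hs (by lia) hknown'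

end BarICP

/-- first part of Corollary 4 of the paper: the optimal broadcast
rate of the `(a_i,0,…,0)_L`-bar-ICP equals exactly `K − (i−1)L + i − 1`. -/
theorem stmt3 (i L : ℕ) (hi : 1 ≤ i) (hL : 1 ≤ L) (a : ℕ → ℕ)
    (ha : ∀ j, 1 ≤ j → j ≤ i - 1 → a j = 0)
    (K : ℕ) (hK : K = (i - 1) * L + a i + 1) :
    optRate (barWant K i) (barKnown K i L a) =
      (K : ℝ) - ((i : ℝ) - 1) * (L : ℝ) + (i : ℝ) - 1 := by
  obtain ⟨n, rfl⟩ := Nat.exists_eq_add_of_le' hi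
  rw [Nat.add_sub_cancel] at ha hK
  have rate_eq : optRate (barWant K (n + 1)) (barKnown K (n + 1) L a) = (a (n + 1) + n + 1 : ℕ) :=
    optRate_eq_natCast (fun _ _ => mul_le_of_validCode_bar ha hK) (by lia : 1 ≤ K)
      (validCode_bar hL ha hK)
  rw [rate_eq, hK]
  push_cast
  ring
end

section
/- Consider the (1,1,1)_2-ICP: a single unicast index coding problem with 8 messages x_1,…,x_8 and 8 users, in which user k demands x_k and knows the side-information set K_k = { <k+2>_8, <k+3>_8, <k+5>_8, <k+6>_8 }. Then the optimal broadcast rate R* of this ICP satisfies R* ≤ 8/3. -/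
/-!
A *clique* is a set of messages such that whoever demands one of them knows all the others, so the
single bit formed by summing one bit of each message of the clique serves all these users at once.
If every message lies in at least `t` of `ℓ` cliques, then each of its `t` bits can be carried by a
clique of its own, and `ℓ` broadcast bits suffice for messages of length `t`. In the
`(1,1,1)_2`-ICP the eight translates of `{0, 2, 5}` modulo `8` are cliques, since the differences
`2, 3, 5` and their negatives are exactly the offsets `2, 3, 5, 6` of the side information, and
every message lies in three of them.
-/

open Finset

/-- Users (= message indices) of a single unicast ICP with `n` users: `[n]`. -/
abbrev Usr (n : ℕ) : Type := {k : ℕ // k ∈ Finset.Icc 1 n}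

/-- Want sets of the `(1,1,1)_2`-ICP: user `k` demands message `k`. -/
def icpW : Usr 8 → Set (Usr 8) := fun u => {x | x.1 = u.1}

/-- Known sets of the `(1,1,1)_2`-ICP: user `k` knows messages
`<k+2>_8, <k+3>_8, <k+5>_8, <k+6>_8`. -/
def icpK : Usr 8 → Set (Usr 8) := fun u =>
  {x | x.1 = angMod ((u.1 : ℤ) + 2) 8 ∨ x.1 = angMod ((u.1 : ℤ) + 3) 8 ∨
       x.1 = angMod ((u.1 : ℤ) + 5) 8 ∨ x.1 = angMod ((u.1 : ℤ) + 6) 8}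

section IndexCoding

variable {I U : Type} {W Kn : U → Set I} {t ℓ : ℕ}

lemma ValidCode.optRate_le (h : ValidCode W Kn t ℓ) (ht : 1 ≤ t) :
    optRate W Kn ≤ (ℓ : ℝ) / t := by
  refine csInf_le ⟨0, ?_⟩ ⟨t, ℓ, ht, h, rfl⟩
  rintro _ ⟨t', ℓ', -, -, rfl⟩
  positivity

lemma validCode_of_eqOn (E : (I → Fin t → Bool) → Fin ℓ → Bool)
    (hE : ∀ u x x', E x = E x' → Set.EqOn x x' (Kn u) → Set.EqOn x x' (W u)) :
    ValidCode W Kn t ℓ := by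
  let received (u : U) (x : I → Fin t → Bool) := (E x, (Kn u).domRestrict x)
  have factors (u : U) : (W u).domRestrict.FactorsThrough (received u) := fun x x' h =>
    Set.domRestrict_eq_domRestrict_iff.2 <|
      hE u x x' (congrArg Prod.fst h) (Set.domRestrict_eq_domRestrict_iff.1 (congrArg Prod.snd h))
  exact ⟨E, fun u y z => Function.extend (received u) (W u).domRestrict (fun _ _ _ => false) (y, z),
    fun x u => (factors u).extend_apply _ x⟩

/-- The clique-cover encoder: the broadcast bit `j` is the sum, over the messages `m` of the clique
`Q j`, of the bit `s` of `m` assigned to that clique, i.e. with `σ m s = j`. Sums are taken in the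
Boolean ring `Bool`, where addition is `xor`; a message with no bit assigned to `Q j` contributes
`0` to it. -/
noncomputable def cliqueEncoder (Q : Fin ℓ → Finset I) (σ : I → Fin t → Fin ℓ)
    (x : I → Fin t → Bool) (j : Fin ℓ) : Bool :=
  ∑ m ∈ Q j, Function.extend (σ m) (x m) 0 j

lemma eq_of_cliqueEncoder_eq {Q : Fin ℓ → Finset I} {σ : I → Fin t → Fin ℓ}
    {x x' : I → Fin t → Bool} {m : I} {s : Fin t} (hσ : (σ m).Injective) (hm : m ∈ Q (σ m s))
    (henc : cliqueEncoder Q σ x (σ m s) = cliqueEncoder Q σ x' (σ m s))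
    (hx : Set.EqOn x x' (Q (σ m s) \ {m})) : x m s = x' m s := by
  classical
  have others : ∑ k ∈ (Q (σ m s)).erase m, Function.extend (σ k) (x k) 0 (σ m s) =
      ∑ k ∈ (Q (σ m s)).erase m, Function.extend (σ k) (x' k) 0 (σ m s) :=
    sum_congr rfl fun k hk => by
      rw [hx ⟨mem_coe.2 (mem_of_mem_erase hk), ne_of_mem_erase hk⟩]
  rw [cliqueEncoder, cliqueEncoder, ← add_sum_erase _ _ hm, ← add_sum_erase _ _ hm, others,
    hσ.extend_apply, hσ.extend_apply] at henc
  exact add_right_cancel henc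

/-- A `t`-fold clique cover: a family of finite sets `Q j` of messages such that a user demanding
a message of `Q j` knows all the other messages of `Q j`, and such that every message belongs to
at least `t` members of the family. -/
structure IsCliqueCover [DecidableEq I] (W Kn : U → Set I) (Q : Fin ℓ → Finset I) (t : ℕ) :
    Prop where
  diff_subset : ∀ u, ∀ m ∈ W u, ∀ j, m ∈ Q j → (Q j : Set I) \ {m} ⊆ Kn u
  le_card : ∀ m, t ≤ #{j | m ∈ Q j}

lemma IsCliqueCover.validCode [DecidableEq I] {Q : Fin ℓ → Finset I}
    (h : IsCliqueCover W Kn Q t) : ValidCode W Kn t ℓ := by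
  let σ (m : I) : Fin t ↪o Fin ℓ := orderEmbOfCardLe {j | m ∈ Q j} (h.le_card m)
  have mem_slot (m : I) (s : Fin t) : m ∈ Q (σ m s) :=
    (mem_filter.1 (orderEmbOfCardLe_mem _ (h.le_card m) s)).2
  refine validCode_of_eqOn (cliqueEncoder Q fun m => σ m) fun u x x' henc hK m hm => ?_
  funext s
  exact eq_of_cliqueEncoder_eq (σ m).injective (mem_slot m s) (congrFun henc _)
    (hK.mono (h.diff_subset u m hm _ (mem_slot m s)))

end IndexCoding

lemma Usr.eq_angMod_iff {n : ℕ} (m : Usr n) (a : ℤ) : m.1 = angMod a n ↔ m.1 ≡ a [ZMOD n] := by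
  obtain ⟨m, hm⟩ := m
  obtain ⟨hm₁, hmn⟩ := mem_Icc.1 hm
  have hn : (0 : ℤ) < n := by omega
  have ha₀ := Int.emod_nonneg a hn.ne'
  have ha := Int.emod_lt_of_pos a hn
  simp only [angMod, Int.ModEq]
  obtain rfl | hlt := hmn.eq_or_lt
  · rw [Int.emod_self]
    split_ifs <;> omega
  · rw [Int.emod_eq_of_lt (a := m) (by omega) (by omega)]
    split_ifs <;> omega

/-- The translate `{<j>_8, <j+2>_8, <j+5>_8}` of `{0, 2, 5}`, a clique of the `(1,1,1)_2`-ICP. The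
eight translates form the threefold clique cover behind the rate `8/3`. -/
def icpClique (j : Fin 8) : Finset (Usr 8) :=
  {m | m.1 = angMod j.1 8 ∨ m.1 = angMod (j.1 + 2) 8 ∨ m.1 = angMod (j.1 + 5) 8}

lemma icpClique_diff_subset {j : Fin 8} {u : Usr 8} (hu : u ∈ icpClique j) :
    (icpClique j : Set (Usr 8)) \ {u} ⊆ icpK u := by
  rintro m ⟨hm, hmu⟩
  have hne : m.1 ≠ u.1 := fun h => hmu (Subtype.ext h)
  have hm_range := mem_Icc.1 m.2
  have hu_range := mem_Icc.1 u.2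
  simp only [icpClique, mem_coe, mem_filter_univ, Usr.eq_angMod_iff, Int.ModEq] at hm hu
  simp only [icpK, Set.mem_ofPred_eq, Usr.eq_angMod_iff, Int.ModEq]
  omega

lemma card_filter_mem_icpClique (m : Usr 8) : #{j | m ∈ icpClique j} = 3 := by
  revert m
  decide

lemma isCliqueCover_icpClique : IsCliqueCover icpW icpK icpClique 3 where
  diff_subset u m hm j hj := by
    obtain rfl : m = u := Subtype.ext hm
    exact icpClique_diff_subset hj
  le_card m := (card_filter_mem_icpClique m).ge

/-- Lemma 14 of the paper: the optimal broadcast rate of the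
`(1,1,1)_2`-ICP is at most `8/3`. -/
theorem stmt12 : optRate icpW icpK ≤ 8 / 3 := by
  calc
    optRate icpW icpK ≤ (8 : ℕ) / (3 : ℕ) :=
      isCliqueCover_icpClique.validCode.optRate_le (by norm_num)
    _ = 8 / 3 := by norm_num
end
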